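/- Let X be a nonempty topological space, R a nonzero commutative Banach ring isolated at 0, and ℓ¹(ℤ,R) the completion of R^{⊕ℤ} under the norm Σ_n ‖r_n‖ (Archimedean ℓ¹ norm, with all weights 1). Then the natural bijective map Cfin(ℤ_disc, R) ⊗̂_R ℓ¹(ℤ,R) → Cfin(ℤ_disc, ℓ¹(ℤ,R)) (where ℤ_disc is ℤ with the discrete topology) is not an isomorphism of Banach modules: its inverse is unbounded. Specifically, for each n ∈ ℕ, the element f_n = Σ_{i=0}^n 1_{{i}} ⊗ δ_i has image of norm ‖1‖_R in the target but norm at least ε²·n in the source, where ε > 0 satisfies {r : ‖r‖_R < ε} = {0}. -/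

import Mathlib

open scoped TensorProduct

set_option synthInstance.maxHeartbeats 1000000

variable (R : Type*) [NormedCommRing R] [CompleteSpace R] [Nontrivial R]

/-- The `R`-module of continuous functions `ℤ → R` (for the discrete topology on `ℤ`)
with finite image. -/
def CfZ : Submodule R (ℤ → R) where
  carrier := {f | Continuous f ∧ (Set.range f).Finite}
  add_mem' {a b} ha hb := ⟨continuous_of_discreteTopology,
    (Set.Finite.image2 (· + ·) ha.2 hb.2).subset (by
      rintro _ ⟨x, rfl⟩
      exact Set.mem_image2_of_mem (Set.mem_range_self x) (Set.mem_range_self x))⟩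
  zero_mem' := ⟨continuous_of_discreteTopology, Set.finite_range_const⟩
  smul_mem' c g hg := ⟨continuous_of_discreteTopology,
    (hg.2.image (c • ·)).subset (by
      rintro _ ⟨x, rfl⟩
      exact ⟨g x, Set.mem_range_self x, rfl⟩)⟩

/-- Finite-image functions `ℤ → ℓ¹(ℤ,R)`; since `ℤ` is discrete, these are exactly the
continuous functions with finite image.  Here `ℓ¹(ℤ,R) = ℤ →₀ R`, which coincides with
the completion of `R^{⊕ℤ}` for the `ℓ¹` norm since `R` is isolated at `0`. -/
noncomputable def CfL : Submodule R (ℤ → (ℤ →₀ R)) where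
  carrier := {f | (Set.range f).Finite}
  add_mem' {a b} ha hb :=
    (Set.Finite.image2 (· + ·) ha hb).subset (by
      rintro _ ⟨x, rfl⟩
      exact Set.mem_image2_of_mem (Set.mem_range_self x) (Set.mem_range_self x))
  zero_mem' := Set.finite_range_const
  smul_mem' c g hg :=
    (hg.image (c • ·)).subset (by
      rintro _ ⟨x, rfl⟩
      exact ⟨g x, Set.mem_range_self x, rfl⟩)

/-- The `ℓ¹` norm `∑ₙ ‖a n‖` on `ℓ¹(ℤ,R) = ℤ →₀ R`. -/
noncomputable def l1norm (a : ℤ →₀ R) : ℝ := a.sum fun _ r => ‖r‖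

/-- The (Archimedean) projective tensor seminorm on `Cfin(ℤ,R) ⊗[R] ℓ¹(ℤ,R)`, with
`Cfin(ℤ,R)` carrying the supremum norm and `ℓ¹(ℤ,R)` the `ℓ¹` norm. -/
noncomputable def pn (t : ↥(CfZ R) ⊗[R] (ℤ →₀ R)) : ℝ :=
  sInf {c : ℝ | ∃ l : List (↥(CfZ R) × (ℤ →₀ R)),
      (l.map fun p => p.1 ⊗ₜ[R] p.2).sum = t ∧
      (l.map fun p => (⨆ x : ℤ, ‖p.1.1 x‖) * l1norm R p.2).sum = c}

/-- The supremum norm on `Cfin(ℤ, ℓ¹(ℤ,R))`. -/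
noncomputable def supL (g : ↥(CfL R)) : ℝ := ⨆ x : ℤ, l1norm R (g.1 x)

/-- The characteristic function `1_{{i}} : ℤ → R` as an element of `Cfin(ℤ,R)`. -/
def ind (i : ℕ) : ↥(CfZ R) :=
  ⟨fun m => if m = (i : ℤ) then 1 else 0,
    ⟨continuous_of_discreteTopology,
      ((Set.finite_singleton (0 : R)).insert 1).subset (by
        rintro _ ⟨x, rfl⟩
        by_cases h : x = (i : ℤ) <;> simp [h])⟩⟩

/-- The element `f_n = ∑_{i=0}^n 1_{{i}} ⊗ δ_i`. -/
noncomputable def fn (n : ℕ) : ↥(CfZ R) ⊗[R] (ℤ →₀ R) :=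
  ∑ i ∈ Finset.range (n + 1), (ind R i) ⊗ₜ[R] (Finsupp.single (i : ℤ) (1 : R))

/-- The bilinear map `(f, a) ↦ (x ↦ f x • a)`. -/
noncomputable def bilAux : ↥(CfZ R) →ₗ[R] (ℤ →₀ R) →ₗ[R] ↥(CfL R) :=
  LinearMap.mk₂ R
    (fun f a => ⟨fun x => f.1 x • a, (f.2.2.image (fun r => r • a)).subset (by
      rintro _ ⟨x, rfl⟩
      exact ⟨f.1 x, Set.mem_range_self x, rfl⟩)⟩)
    (fun f g a => Subtype.ext (funext fun x => add_smul (f.1 x) (g.1 x) a))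
    (fun c f a => Subtype.ext (funext fun x => mul_smul c (f.1 x) a))
    (fun f a b => Subtype.ext (funext fun x => smul_add (f.1 x) a b))
    (fun c f a => Subtype.ext (funext fun x => smul_comm (f.1 x) c a))

/-- The natural map. -/
noncomputable def phiAux : (↥(CfZ R) ⊗[R] (ℤ →₀ R)) →ₗ[R] ↥(CfL R) :=
  TensorProduct.lift (bilAux R)

theorem phiAux_tmul (f : CfZ R) (a : ℤ →₀ R) (x : ℤ) :
    (phiAux R (f ⊗ₜ[R] a)).1 x = f.1 x • a := by
  rw [phiAux, TensorProduct.lift.tmul]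
  rfl

theorem phiAux_eq (t : ↥(CfZ R) ⊗[R] (ℤ →₀ R)) (x k : ℤ) :
    (phiAux R t).1 x k = (TensorProduct.finsuppScalarRight R R (↥(CfZ R)) ℤ t k).1 x := by
  induction t using TensorProduct.induction_on with
  | zero => simp
  | tmul f a =>
    rw [phiAux_tmul, TensorProduct.finsuppScalarRight_apply_tmul_apply]
    simp [mul_comm]
  | add s t hs ht =>
    simp only [map_add, Finsupp.add_apply, Submodule.coe_add, Pi.add_apply, hs, ht]

theorem phiAux_inj : Function.Injective (phiAux R) := by
  rw [injective_iff_map_eq_zero]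
  intro t ht
  apply (TensorProduct.finsuppScalarRight R R (↥(CfZ R)) ℤ).injective
  rw [map_zero]
  ext k x
  rw [← phiAux_eq, ht]
  rfl

theorem phiAux_surj : Function.Surjective (phiAux R) := by
  classical
  intro g
  have hg : (Set.range g.1).Finite := g.2
  let e : (ℤ →₀ R) → CfZ R := fun v => ⟨fun x => if g.1 x = v then 1 else 0,
    ⟨continuous_of_discreteTopology,
      ((Set.finite_singleton (0 : R)).insert 1).subset (by
        rintro _ ⟨x, rfl⟩
        by_cases h : g.1 x = v <;> simp [h])⟩⟩
  refine ⟨∑ v ∈ hg.toFinset, e v ⊗ₜ[R] v, ?_⟩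
  apply Subtype.ext
  funext x
  rw [map_sum, Submodule.coe_sum, Finset.sum_apply]
  simp only [phiAux_tmul]
  rw [Finset.sum_eq_single (g.1 x)]
  · simp [e]
  · intro b _ hb
    simp [e, hb.symm]
  · intro h
    exact absurd (by simp) h

theorem phiAux_fn (n : ℕ) (x : ℤ) :
    (phiAux R (fn R n)).1 x =
      if 0 ≤ x ∧ x ≤ n then Finsupp.single x (1 : R) else 0 := by
  rw [fn, map_sum, Submodule.coe_sum, Finset.sum_apply]
  simp only [phiAux_tmul, ind]
  split_ifs with h
  · obtain ⟨m, rfl⟩ := Int.eq_ofNat_of_zero_le h.1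
    rw [Finset.sum_eq_single m]
    · simp
    · intro b _ hb
      have : (m : ℤ) ≠ b := by exact_mod_cast hb.symm
      simp [hb.symm]
    · intro h'
      exact absurd (Finset.mem_range.2 (by omega)) h'
  · apply Finset.sum_eq_zero
    intro b hb
    have := Finset.mem_range.1 hb
    have : x ≠ b := by
      intro hx
      apply h
      omega
    simp [this]

theorem l1_single (x : ℤ) (r : R) : l1norm R (Finsupp.single x r) = ‖r‖ := by
  simp [l1norm]

theorem l1_nonneg (a : ℤ →₀ R) : 0 ≤ l1norm R a :=
  Finset.sum_nonneg fun _ _ => norm_nonneg _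

theorem supL_fn (n : ℕ) : supL R (phiAux R (fn R n)) = ‖(1 : R)‖ := by
  have hle : ∀ x, l1norm R ((phiAux R (fn R n)).1 x) ≤ ‖(1 : R)‖ := by
    intro x
    rw [phiAux_fn]
    split_ifs
    · rw [l1_single]
    · simp [l1norm]
  apply le_antisymm (ciSup_le hle)
  have h0 : l1norm R ((phiAux R (fn R n)).1 0) = ‖(1 : R)‖ := by
    rw [phiAux_fn, if_pos (by simp), l1_single]
  rw [← h0]
  exact le_ciSup (f := fun x => l1norm R ((phiAux R (fn R n)).1 x))
    ⟨_, Set.forall_mem_range.2 hle⟩ 0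

theorem l1_lower (ε : ℝ) (hiso : ∀ r : R, ‖r‖ < ε → r = 0) (a : ℤ →₀ R) (ha : a ≠ 0) :
    ε ≤ l1norm R a := by
  obtain ⟨k, hk⟩ := Finsupp.ne_iff.1 ha
  have h1 : ε ≤ ‖a k‖ := not_lt.1 fun h => hk (hiso _ h)
  refine h1.trans ?_
  exact Finset.single_le_sum (f := fun i => ‖a i‖) (fun _ _ => norm_nonneg _)
    (Finsupp.mem_support_iff.2 hk)

theorem sup_nonneg' (f : CfZ R) : 0 ≤ ⨆ x : ℤ, ‖f.1 x‖ :=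
  Real.iSup_nonneg fun _ => norm_nonneg _

theorem sup_lower (ε : ℝ) (hiso : ∀ r : R, ‖r‖ < ε → r = 0) (f : CfZ R) (hf : f ≠ 0) :
    ε ≤ ⨆ x : ℤ, ‖f.1 x‖ := by
  have : ∃ k, f.1 k ≠ 0 := by
    by_contra! h
    exact hf (Subtype.ext (funext h))
  obtain ⟨k, hk⟩ := this
  have h1 : ε ≤ ‖f.1 k‖ := not_lt.1 fun h => hk (hiso _ h)
  refine h1.trans (le_ciSup (f := fun x => ‖f.1 x‖) ?_ k)
  apply Set.Finite.bddAbove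
  refine (f.2.2.image norm).subset ?_
  rintro _ ⟨x, rfl⟩
  exact ⟨f.1 x, Set.mem_range_self x, rfl⟩

open Classical in
/-- The summands that are not trivially zero. -/
noncomputable def good (l : List (↥(CfZ R) × (ℤ →₀ R))) : List (↥(CfZ R) × (ℤ →₀ R)) :=
  l.filter fun p => p.1 ≠ 0 ∧ p.2 ≠ 0

theorem good_cost (ε : ℝ) (hε : 0 < ε) (hiso : ∀ r : R, ‖r‖ < ε → r = 0)
    (l : List (↥(CfZ R) × (ℤ →₀ R))) :
    ε ^ 2 * (good R l).length ≤
      (l.map fun p => (⨆ x : ℤ, ‖p.1.1 x‖) * l1norm R p.2).sum := by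
  induction l with
  | nil => simp [good]
  | cons p l ih =>
    rw [List.map_cons, List.sum_cons]
    by_cases h : p.1 ≠ 0 ∧ p.2 ≠ 0
    · have e : good R (p :: l) = p :: good R l := List.filter_cons_of_pos (by simpa using h)
      rw [e, List.length_cons]
      push_cast
      have := mul_le_mul (sup_lower R ε hiso p.1 h.1) (l1_lower R ε hiso p.2 h.2) hε.le
        (sup_nonneg' R p.1)
      nlinarith
    · have e : good R (p :: l) = good R l := List.filter_cons_of_neg (by simpa using h)
      rw [e]
      have := mul_nonneg (sup_nonneg' R p.1) (l1_nonneg R p.2)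
      linarith

theorem good_sum (l : List (↥(CfZ R) × (ℤ →₀ R))) (x k : ℤ) :
    ((good R l).map fun p => p.1.1 x * p.2 k).sum =
      (phiAux R (l.map fun p => p.1 ⊗ₜ[R] p.2).sum).1 x k := by
  induction l with
  | nil => simp [good]
  | cons p l ih =>
    rw [List.map_cons, List.sum_cons, map_add, Submodule.coe_add, Pi.add_apply,
      Finsupp.add_apply, ← ih, phiAux_tmul]
    by_cases h : p.1 ≠ 0 ∧ p.2 ≠ 0
    · have e : good R (p :: l) = p :: good R l := List.filter_cons_of_pos (by simpa using h)
      rw [e, List.map_cons, List.sum_cons]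
      simp
    · have e : good R (p :: l) = good R l := List.filter_cons_of_neg (by simpa using h)
      rw [e]
      by_cases h1 : p.1 = 0
      · simp [h1]
      · have h2 : p.2 = 0 := by
          by_contra h2
          exact h ⟨h1, h2⟩
        simp [h2]

theorem good_length (n : ℕ) (l : List (↥(CfZ R) × (ℤ →₀ R)))
    (hl : (l.map fun p => p.1 ⊗ₜ[R] p.2).sum = fn R n) : n + 1 ≤ (good R l).length := by
  let A : Matrix (Fin (n + 1)) (Fin (good R l).length) R :=
    fun i h => ((good R l)[h]).1.1 ((i : ℕ) : ℤ)
  let B : Matrix (Fin (good R l).length) (Fin (n + 1)) R :=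
    fun h j => ((good R l)[h]).2 ((j : ℕ) : ℤ)
  have hAB : A * B = 1 := by
    ext i j
    rw [Matrix.mul_apply]
    have h1 := good_sum R l ((i : ℕ) : ℤ) ((j : ℕ) : ℤ)
    rw [hl, phiAux_fn, if_pos (by have := i.2; omega), ← Fin.sum_univ_fun_getElem] at h1
    refine h1.trans ?_
    rw [Matrix.one_apply, Finsupp.single_apply]
    simp [Fin.ext_iff]
  have h2 := (Matrix.rank_mul_le_left A B).trans A.rank_le_width
  rwa [hAB, Matrix.rank_one, Fintype.card_fin] at h2

theorem pn_fn (ε : ℝ) (hε : 0 < ε) (hiso : ∀ r : R, ‖r‖ < ε → r = 0) (n : ℕ) :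
    ε ^ 2 * n ≤ pn R (fn R n) := by
  apply le_csInf
  · refine ⟨_, (List.range (n + 1)).map fun i => (ind R i, Finsupp.single (i : ℤ) (1 : R)),
      ?_, rfl⟩
    rw [List.map_map]
    rfl
  · rintro c ⟨l, hl, rfl⟩
    refine le_trans ?_ (good_cost R ε hε hiso l)
    have := good_length R n l hl
    have h : (n : ℝ) ≤ (good R l).length := by exact_mod_cast (Nat.le_succ n).trans this
    gcongr

/-- For a nonzero Banach ring `R` isolated at `0` (with witness `ε`), the natural
bijective map `Cfin(ℤ,R) ⊗̂[R] ℓ¹(ℤ,R) → Cfin(ℤ, ℓ¹(ℤ,R))` is not an isomorphism of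
Banach modules: its inverse is unbounded.  Specifically, `f_n = ∑_{i≤n} 1_{{i}} ⊗ δ_i`
has image of norm `‖1‖_R` but source seminorm at least `ε² n`. -/
theorem stmt15 (ε : ℝ) (hε : 0 < ε) (hiso : ∀ r : R, ‖r‖ < ε → r = 0) :
    ∃ φ : (↥(CfZ R) ⊗[R] (ℤ →₀ R)) →ₗ[R] ↥(CfL R),
      (∀ (f : CfZ R) (a : ℤ →₀ R) (x : ℤ), (φ (f ⊗ₜ[R] a)).1 x = f.1 x • a) ∧
      Function.Bijective φ ∧
      (¬ ∃ C : ℝ, ∀ t, pn R t ≤ C * supL R (φ t)) ∧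
      (∀ n : ℕ, supL R (φ (fn R n)) = ‖(1 : R)‖ ∧ ε ^ 2 * n ≤ pn R (fn R n)) := by
  have hpn := pn_fn R ε hε hiso
  refine ⟨phiAux R, phiAux_tmul R, ⟨phiAux_inj R, phiAux_surj R⟩, ?_,
    fun n => ⟨supL_fn R n, hpn n⟩⟩
  rintro ⟨C, hC⟩
  obtain ⟨n, hn⟩ := exists_nat_gt (C * ‖(1 : R)‖ / ε ^ 2)
  rw [div_lt_iff₀ (by positivity)] at hn
  have h1 := hC (fn R n)
  rw [supL_fn] at h1
  linarith [hpn n]
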